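/- arXiv:1603.06493 — 2 statements merged into one kernel-verified Lean document; each statement's English description precedes it below -/
import Mathlib

section
/- For every ε > 0 there exists δ > 0, depending only on ε, N, p and κ, such that for every admissible pair (A, m) with constant κ and every u ∈ ℝ^N with u ≥ 0, g(u) ≠ 0 and v(u) < δ, one has min over nonempty I ⊆ {1,…,N} of (Σ_{i ∈ I} u_i + Σ_{j ∉ I} |f_j(u)|) < ε. In other words, this minimum tends to 0 as v(u) → 0 over nonnegative u, uniformly with respect to admissible coefficients. -/
/-!
Let `f = m - A u` and let `M = max |f_i|`. Since `g(u) ≤ N M ^ p`, smallness of `v(u)` forces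
`|f_j| < s M` on `J = {j | s ≤ u_j}`; in particular `J` misses the index where the maximum is
attained, and the sum attached to `I = Jᶜ` is at most `N s (1 + M)`. It remains to bound `M` by a
constant. On `J` the vector `u` solves a linear system with matrix `A_J` and right-hand side
`m_J - f_J - A_{J,I} u_I = O(1 + s M)`. As `det A_J ≥ κ`, Cramer's rule gives `u = O(1 + s M)`,
hence `M = O(1 + s M)`, and the term `s M` is absorbed on the left when `s` is small.
-/

open MeasureTheory Filter

/-- Principal minor of `A` over the index set `I`. -/
noncomputable def minorP {N : ℕ} (A : Matrix (Fin N) (Fin N) ℝ) (I : Finset (Fin N)) : ℝ :=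
  Matrix.det (Matrix.of fun i j : {x : Fin N // x ∈ I} => A i.1 j.1)

/-- The determinant `Δ_{I,j}` obtained by bordering the principal minor over `I`
with the column `m` and the row `j`. -/
noncomputable def minorM {N : ℕ} (A : Matrix (Fin N) (Fin N) ℝ) (m : Fin N → ℝ)
    (I : Finset (Fin N)) (j : Fin N) : ℝ :=
  Matrix.det (Matrix.of fun k l : Option {x : Fin N // x ∈ I} =>
    match k, l with
    | some k', some l' => A k'.1 l'.1
    | some k', none => m k'.1
    | none, some l' => A j l'.1
    | none, none => m j)

/-- An admissible pair of coefficients with constant `κ`: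
entries of `A` and `m` bounded by `1/κ`, all principal minors `Δ_I ≥ κ`,
and all bordered determinants `Δ_{I,j} ≥ κ` for `j ∉ I`. -/
def IsAdmissible {N : ℕ} (κ : ℝ) (A : Matrix (Fin N) (Fin N) ℝ) (m : Fin N → ℝ) : Prop :=
  (∀ i j, |A i j| ≤ 1 / κ) ∧ (∀ i, m i ≤ 1 / κ) ∧
    (∀ I : Finset (Fin N), κ ≤ minorP A I) ∧
    (∀ I : Finset (Fin N), ∀ j ∉ I, κ ≤ minorM A m I j)

/-- `f_i(u) = m_i − Σ_j a_{ij} u_j`. -/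
def fComp {N : ℕ} (A : Matrix (Fin N) (Fin N) ℝ) (m : Fin N → ℝ) (u : Fin N → ℝ)
    (i : Fin N) : ℝ :=
  m i - ∑ j, A i j * u j

section SupNormEstimates

open scoped Matrix Nat

variable {ι n 𝕜 : Type*}

lemma norm_mulVec_le {R : Type*} [NonUnitalSeminormedRing R] [Fintype ι] [Fintype n]
    {A : Matrix ι n R} {K : ℝ} (hK : 0 ≤ K) (hA : ∀ i j, ‖A i j‖ ≤ K) (x : n → R) :
    ‖A *ᵥ x‖ ≤ Fintype.card n * K * ‖x‖ := by
  refine (pi_norm_le_iff_of_nonneg (by positivity)).2 fun i => ?_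
  calc ‖(A *ᵥ x) i‖ ≤ ∑ _j : n, K * ‖x‖ :=
        norm_sum_le_of_le _ fun j _ =>
          norm_mul_le_of_le (hA i j) (norm_le_pi_norm x j)
    _ = Fintype.card n * K * ‖x‖ := by simp [mul_assoc]

variable [NormedField 𝕜]

lemma norm_adjugate_apply_le [Fintype n] [DecidableEq n] {B : Matrix n n 𝕜} {K : ℝ}
    (hB : ∀ i j, ‖B i j‖ ≤ K) (i j : n) :
    ‖B.adjugate i j‖ ≤ (Fintype.card n)! * max 1 K ^ Fintype.card n := by
  have entry_le (k l : n) : ‖B.updateRow j (Pi.single i 1) k l‖ ≤ max 1 K := by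
    rw [Matrix.updateRow_apply, Pi.single_apply]
    split_ifs
    · simp
    · simp
    · exact (hB k l).trans (le_max_right _ _)
  rw [Matrix.adjugate_apply, ← nsmul_eq_mul]
  exact Matrix.det_le (abv := NormedField.toAbsoluteValue 𝕜) entry_le

/-- The constant in Cramer's rule: it bounds the sup operator norm of the inverse of an `n × n`
matrix whose entries have norm at most `K` and whose determinant has norm at least `κ > 0`. -/
noncomputable def cramerBound (n : ℕ) (K κ : ℝ) : ℝ := n * (n ! * max 1 K ^ n) / κ

lemma cramerBound_nonneg (n : ℕ) (K : ℝ) {κ : ℝ} (hκ : 0 ≤ κ) : 0 ≤ cramerBound n K κ := by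
  unfold cramerBound
  positivity

lemma cramerBound_mono (K : ℝ) {κ : ℝ} (hκ : 0 ≤ κ) : Monotone fun n => cramerBound n K κ := by
  intro k n hkn
  unfold cramerBound
  dsimp only
  gcongr
  exact le_max_left 1 K

lemma norm_le_cramerBound_mul_norm_mulVec [Fintype n] [DecidableEq n] {B : Matrix n n 𝕜}
    {K κ : ℝ} (hκ : 0 < κ) (hB : ∀ i j, ‖B i j‖ ≤ K) (hdet : κ ≤ ‖B.det‖) (x : n → 𝕜) :
    ‖x‖ ≤ cramerBound (Fintype.card n) K κ * ‖B *ᵥ x‖ := by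
  have cramer : B.det • x = B.adjugate *ᵥ (B *ᵥ x) := by
    rw [Matrix.mulVec_mulVec, Matrix.adjugate_mul, Matrix.smul_mulVec, Matrix.one_mulVec]
  rw [cramerBound, div_mul_eq_mul_div, le_div_iff₀' hκ]
  calc κ * ‖x‖ ≤ ‖B.det‖ * ‖x‖ := by gcongr
    _ = ‖B.adjugate *ᵥ (B *ᵥ x)‖ := by rw [← cramer, norm_smul]
    _ ≤ _ := norm_mulVec_le (by positivity) (norm_adjugate_apply_le hB) _

lemma submatrix_mulVec_restrict {R : Type*} [NonUnitalNonAssocRing R] [Fintype ι]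
    [DecidableEq ι] (A : Matrix ι ι R) (J : Finset ι) (u : ι → R) (j : J) :
    (A.submatrix ((↑) : J → ι) (↑) *ᵥ fun k : J => u k) j =
      (A *ᵥ u) j - ∑ i ∈ Jᶜ, A j i * u i := by
  rw [eq_sub_iff_add_eq, Matrix.mulVec, Matrix.mulVec, dotProduct, dotProduct,
    ← Finset.sum_add_sum_compl J]
  congr 1
  exact Finset.sum_coe_sort J fun k => A j k * u k

variable [Fintype ι] [DecidableEq ι]

lemma norm_le_of_le_norm_det_submatrix {A : Matrix ι ι 𝕜} {K κ r b : ℝ} (hκ : 0 < κ)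
    (hK : 0 ≤ K) (hA : ∀ i j, ‖A i j‖ ≤ K) {J : Finset ι}
    (hdet : κ ≤ ‖(A.submatrix ((↑) : J → ι) (↑)).det‖) {u : ι → 𝕜} (hr : 0 ≤ r) (hb : 0 ≤ b)
    (hu : ∀ i ∉ J, ‖u i‖ ≤ r) (hAu : ∀ j ∈ J, ‖(A *ᵥ u) j‖ ≤ b) :
    ‖u‖ ≤ r + cramerBound (Fintype.card ι) K κ * (b + Fintype.card ι * (K * r)) := by
  set C := cramerBound (Fintype.card ι) K κ
  have hC : 0 ≤ C := cramerBound_nonneg _ _ hκ.le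
  have tail_le (j : ι) : ‖∑ i ∈ Jᶜ, A j i * u i‖ ≤ Fintype.card ι * (K * r) :=
    calc ‖∑ i ∈ Jᶜ, A j i * u i‖ ≤ ∑ _i ∈ Jᶜ, K * r :=
          norm_sum_le_of_le _ fun i hi =>
            norm_mul_le_of_le (hA j i) (hu i (Finset.mem_compl.1 hi))
      _ = Jᶜ.card * (K * r) := by rw [Finset.sum_const, nsmul_eq_mul]
      _ ≤ Fintype.card ι * (K * r) := by
          gcongr
          exact Finset.card_le_univ _
  have restrict_le : ‖fun k : J => u k‖ ≤ C * (b + Fintype.card ι * (K * r)) := by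
    refine (norm_le_cramerBound_mul_norm_mulVec (B := A.submatrix ((↑) : J → ι) (↑)) hκ
      (fun i j => hA i j) hdet _).trans ?_
    gcongr
    · exact cramerBound_mono K hκ.le (Fintype.card_coe J ▸ Finset.card_le_univ J)
    · refine (pi_norm_le_iff_of_nonneg (by positivity)).2 fun j => ?_
      rw [submatrix_mulVec_restrict]
      exact norm_sub_le_of_le (hAu j j.2) (tail_le j)
  refine (pi_norm_le_iff_of_nonneg (by positivity)).2 fun i => ?_
  by_cases hi : i ∈ J
  · exact (norm_le_pi_norm (fun k : J => u k) ⟨i, hi⟩).trans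
      (restrict_le.trans (le_add_of_nonneg_left hr))
  · exact (hu i hi).trans (le_add_of_nonneg_right (by positivity))

lemma norm_sub_mulVec_le_of_small {A : Matrix ι ι 𝕜} {m u : ι → 𝕜} {K κ s : ℝ} (hκ : 0 < κ)
    (hA : ∀ i j, ‖A i j‖ ≤ K) (hm : ‖m‖ ≤ K) {I : Finset ι}
    (hdet : κ ≤ ‖(A.submatrix ((↑) : ↥Iᶜ → ι) (↑)).det‖) (hs : 0 ≤ s) (hs_one : s ≤ 1)
    (hs_small : Fintype.card ι * K * cramerBound (Fintype.card ι) K κ * s ≤ 1 / 2)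
    (hu : ∀ i ∈ I, ‖u i‖ ≤ s) (hf : ∀ j ∉ I, ‖(m - A *ᵥ u) j‖ ≤ s * ‖m - A *ᵥ u‖) :
    ‖m - A *ᵥ u‖ ≤ 2 * (K + Fintype.card ι * K *
      (1 + cramerBound (Fintype.card ι) K κ * (K + Fintype.card ι * K))) := by
  set N := (Fintype.card ι : ℝ)
  set C := cramerBound (Fintype.card ι) K κ
  set M := ‖m - A *ᵥ u‖
  have hC : 0 ≤ C := cramerBound_nonneg _ _ hκ.le
  have hK : 0 ≤ K := (norm_nonneg m).trans hm
  have hAu (j : ι) (hj : j ∈ Iᶜ) : ‖(A *ᵥ u) j‖ ≤ K + s * M :=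
    calc ‖(A *ᵥ u) j‖ = ‖m j - (m - A *ᵥ u) j‖ := by rw [Pi.sub_apply, sub_sub_cancel]
      _ ≤ K + s * M :=
          norm_sub_le_of_le ((norm_le_pi_norm m j).trans hm) (hf j (Finset.mem_compl.1 hj))
  have u_le : ‖u‖ ≤ 1 + C * (K + s * M + N * K) :=
    calc ‖u‖ ≤ s + C * (K + s * M + N * (K * s)) :=
          norm_le_of_le_norm_det_submatrix hκ hK hA hdet hs (by positivity)
            (fun i hi => hu i (Finset.notMem_compl.1 hi)) hAu
      _ ≤ 1 + C * (K + s * M + N * K) := by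
          gcongr
          exact mul_le_of_le_one_right hK hs_one
  have M_le : M ≤ K + N * K * (1 + C * (K + s * M + N * K)) :=
    norm_sub_le_of_le hm ((norm_mulVec_le hK hA u).trans (by gcongr))
  have absorb : N * K * C * s * M ≤ 1 / 2 * M := by gcongr
  linarith

end SupNormEstimates

section WeightedMean

variable {ι : Type*} [Fintype ι]

lemma lt_mul_of_weightedMean_rpow_lt {a b : ι → ℝ} {p s δ M : ℝ} (hp : 0 < p) (hs : 0 < s)
    (ha : ∀ i, 0 ≤ a i) (hb : ∀ i, 0 ≤ b i) (hbM : ∀ i, b i ≤ M) (hb_ne : ∑ i, b i ^ p ≠ 0)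
    (hδs : Fintype.card ι * δ ≤ s * s ^ p)
    (hmean : (∑ i, a i * b i ^ p) / ∑ i, b i ^ p < δ) {j : ι} (hj : s ≤ a j) :
    b j < s * M := by
  have hM : 0 ≤ M := (hb j).trans (hbM j)
  have hpow (i : ι) : 0 ≤ b i ^ p := Real.rpow_nonneg (hb i) p
  have hδ : 0 ≤ δ := (div_nonneg (Finset.sum_nonneg fun i _ => mul_nonneg (ha i) (hpow i))
    (Finset.sum_nonneg fun i _ => hpow i)).trans hmean.le
  have sum_pos : 0 < ∑ i, b i ^ p := (Finset.sum_nonneg fun i _ => hpow i).lt_of_ne' hb_ne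
  have sum_le : ∑ i, b i ^ p ≤ Fintype.card ι * M ^ p := by
    simpa using Finset.sum_le_card_nsmul Finset.univ (fun i => b i ^ p) (M ^ p)
      fun i _ => Real.rpow_le_rpow (hb i) (hbM i) hp.le
  have key : s * b j ^ p < s * (s * M) ^ p :=
    calc s * b j ^ p ≤ a j * b j ^ p := mul_le_mul_of_nonneg_right hj (hpow j)
      _ ≤ ∑ i, a i * b i ^ p :=
          Finset.single_le_sum (f := fun i => a i * b i ^ p)
            (fun i _ => mul_nonneg (ha i) (hpow i)) (Finset.mem_univ j)
      _ < δ * ∑ i, b i ^ p := (div_lt_iff₀ sum_pos).1 hmean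
      _ ≤ δ * (Fintype.card ι * M ^ p) := by gcongr
      _ = Fintype.card ι * δ * M ^ p := by ring
      _ ≤ s * s ^ p * M ^ p := by gcongr
      _ = s * (s * M) ^ p := by rw [Real.mul_rpow hs.le hM, mul_assoc]
  exact (Real.rpow_lt_rpow_iff (hb j) (by positivity) hp).1 (lt_of_mul_lt_mul_left key hs.le)

lemma exists_nonempty_le_of_weightedMean_rpow_lt {a b : ι → ℝ} {p s δ M : ℝ} (hp : 0 < p)
    (hs : 0 < s) (hs_one : s ≤ 1) (ha : ∀ i, 0 ≤ a i) (hb : ∀ i, 0 ≤ b i)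
    (hM : IsGreatest (Set.range b) M) (hb_ne : ∑ i, b i ^ p ≠ 0)
    (hδs : Fintype.card ι * δ ≤ s * s ^ p)
    (hmean : (∑ i, a i * b i ^ p) / ∑ i, b i ^ p < δ) :
    ∃ I : Finset ι, I.Nonempty ∧ (∀ i ∈ I, a i ≤ s) ∧ ∀ j ∉ I, b j ≤ s * M := by
  obtain ⟨⟨i₀, hi₀⟩, hbM⟩ := hM
  replace hbM (i : ι) : b i ≤ M := hbM (Set.mem_range_self i)
  have b_lt {j : ι} (hj : s ≤ a j) : b j < s * M :=
    lt_mul_of_weightedMean_rpow_lt hp hs ha hb hbM hb_ne hδs hmean hj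
  have a_lt : a i₀ < s := by
    by_contra! h
    exact (b_lt h).not_ge (hi₀ ▸ mul_le_of_le_one_left (hb i₀) hs_one)
  refine ⟨Finset.univ.filter (a · < s), ⟨i₀, by simpa using a_lt⟩, fun i hi => ?_, fun j hj => ?_⟩
  · exact (Finset.mem_filter.1 hi).2.le
  · exact (b_lt (by simpa using hj)).le

lemma sum_add_sum_compl_le_card_mul [DecidableEq ι] {a b : ι → ℝ} {c : ℝ} {I : Finset ι}
    (ha : ∀ i ∈ I, a i ≤ c) (hb : ∀ j ∉ I, b j ≤ c) :
    ∑ i ∈ I, a i + ∑ j ∈ Iᶜ, b j ≤ Fintype.card ι * c :=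
  calc ∑ i ∈ I, a i + ∑ j ∈ Iᶜ, b j ≤ ∑ _i ∈ I, c + ∑ _j ∈ Iᶜ, c :=
        add_le_add (Finset.sum_le_sum ha)
          (Finset.sum_le_sum fun j hj => hb j (Finset.mem_compl.1 hj))
    _ = Fintype.card ι * c := by
        rw [Finset.sum_add_sum_compl, Finset.sum_const, Finset.card_univ, nsmul_eq_mul]

end WeightedMean

section Smallness

open scoped Topology

lemma exists_pos_lt_one_mul_lt_mul_lt (c d : ℝ) {a b : ℝ} (ha : 0 < a) (hb : 0 < b) :
    ∃ s : ℝ, 0 < s ∧ s < 1 ∧ c * s < a ∧ d * s < b := by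
  have eventually_lt (k : ℝ) {r : ℝ} (hr : 0 < r) : ∀ᶠ s in 𝓝[>] (0 : ℝ), k * s < r :=
    (((continuous_const_mul k).tendsto' 0 0 (mul_zero k)).eventually_lt_const hr).filter_mono
      nhdsWithin_le_nhds
  obtain ⟨s, hs, h_one, hc, hd⟩ := (eventually_mem_nhdsWithin.and
    ((eventually_lt 1 one_pos).and ((eventually_lt c ha).and (eventually_lt d hb)))).exists
  exact ⟨s, hs, one_mul s ▸ h_one, hc, hd⟩

end Smallness

section General

open scoped Matrix

variable {ι 𝕜 : Type*} [Fintype ι] [DecidableEq ι] [NormedField 𝕜]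

theorem min_over_index_sets_tendsto_zero_uniform_general {p κ ε : ℝ} (K : ℝ) (hp : 0 < p)
    (hκ : 0 < κ) (hε : 0 < ε) :
    ∃ δ : ℝ, 0 < δ ∧
      ∀ (A : Matrix ι ι 𝕜) (m : ι → 𝕜), (∀ i j, ‖A i j‖ ≤ K) → ‖m‖ ≤ K →
        (∀ J : Finset ι, J ≠ Finset.univ → κ ≤ ‖(A.submatrix ((↑) : J → ι) (↑)).det‖) →
        ∀ u : ι → 𝕜, ∑ i, ‖(m - A *ᵥ u) i‖ ^ p ≠ 0 →
          (∑ i, ‖u i‖ * ‖(m - A *ᵥ u) i‖ ^ p) / ∑ i, ‖(m - A *ᵥ u) i‖ ^ p < δ →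
          ∃ I : Finset ι, I.Nonempty ∧
            ∑ i ∈ I, ‖u i‖ + ∑ j ∈ Iᶜ, ‖(m - A *ᵥ u) j‖ < ε := by
  set C := cramerBound (Fintype.card ι) K κ
  set B := 2 * (K + Fintype.card ι * K * (1 + C * (K + Fintype.card ι * K)))
  obtain ⟨s, hs, hs_one, hs_small, hsε⟩ :=
    exists_pos_lt_one_mul_lt_mul_lt (Fintype.card ι * K * C) (Fintype.card ι * (1 + B))
      one_half_pos hε
  obtain ⟨δ, hδ, hδs⟩ := exists_pos_mul_lt (by positivity : 0 < s * s ^ p) (Fintype.card ι)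
  refine ⟨δ, hδ, fun A m hA hm hdet u hf_ne hmean => ?_⟩
  set f := m - A *ᵥ u
  have : Nonempty ι := not_isEmpty_iff.1 fun _ => hf_ne (by simp)
  obtain ⟨I, hI, u_le, f_le⟩ := exists_nonempty_le_of_weightedMean_rpow_lt hp hs hs_one.le
    (fun i => norm_nonneg (u i)) (fun i => norm_nonneg (f i)) (IsGreatest.pi_norm f) hf_ne
    hδs.le hmean
  have norm_f_le : ‖f‖ ≤ B :=
    norm_sub_mulVec_le_of_small hκ hA hm (hdet Iᶜ (by simpa using hI.ne_empty)) hs.le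
      hs_one.le hs_small.le u_le f_le
  have norm_f_nonneg : 0 ≤ ‖f‖ := norm_nonneg f
  refine ⟨I, hI, ?_⟩
  calc ∑ i ∈ I, ‖u i‖ + ∑ j ∈ Iᶜ, ‖f j‖ ≤ Fintype.card ι * (s * (1 + B)) := by
        refine sum_add_sum_compl_le_card_mul (fun i hi => ?_) fun j hj => ?_
        · exact (u_le i hi).trans (le_mul_of_one_le_right hs.le (by linarith))
        · exact (f_le j hj).trans (by gcongr; linarith)
    _ = Fintype.card ι * (1 + B) * s := by ring
    _ < ε := hsε

end General

lemma minorM_empty {N : ℕ} (A : Matrix (Fin N) (Fin N) ℝ) (m : Fin N → ℝ) (i : Fin N) :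
    minorM A m ∅ i = m i :=
  Matrix.det_eq_elem_of_subsingleton _ none

lemma IsAdmissible.norm_m_le {N : ℕ} {κ : ℝ} {A : Matrix (Fin N) (Fin N) ℝ} {m : Fin N → ℝ}
    (h : IsAdmissible κ A m) (hκ : 0 < κ) : ‖m‖ ≤ 1 / κ := by
  obtain ⟨-, m_le, -, minorM_ge⟩ := h
  refine (pi_norm_le_iff_of_nonneg (by positivity)).2 fun i => ?_
  have m_pos : 0 < m i := hκ.trans_le (minorM_empty A m i ▸ minorM_ge ∅ i (Finset.notMem_empty i))
  rw [Real.norm_of_nonneg m_pos.le]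
  exact m_le i

/-- For every `ε > 0` there is `δ > 0` depending only on `ε`, `N`, `p`, `κ` such that for
every admissible pair and every nonnegative `u` with `g(u) ≠ 0` and `v(u) < δ`, the minimum
over nonempty `I` of `Σ_{i ∈ I} u_i + Σ_{j ∉ I} |f_j(u)|` is `< ε`. -/
theorem min_over_index_sets_tendsto_zero_uniform {N : ℕ} (hN : 0 < N) (p κ : ℝ)
    (hp : 1 ≤ p) (hκ : 0 < κ) :
    ∀ ε : ℝ, 0 < ε → ∃ δ : ℝ, 0 < δ ∧
      ∀ (A : Matrix (Fin N) (Fin N) ℝ) (m : Fin N → ℝ), IsAdmissible κ A m →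
        ∀ u : Fin N → ℝ, (∀ i, 0 ≤ u i) → (∑ i, |fComp A m u i| ^ p) ≠ 0 →
          (∑ i, u i * |fComp A m u i| ^ p) / (∑ i, |fComp A m u i| ^ p) < δ →
          ∃ I : Finset (Fin N), I.Nonempty ∧
            (∑ i ∈ I, u i) + (∑ j ∈ Iᶜ, |fComp A m u j|) < ε := by
  intro ε hε
  obtain ⟨δ, hδ, h⟩ := min_over_index_sets_tendsto_zero_uniform_general (ι := Fin N) (𝕜 := ℝ)
    (1 / κ) (zero_lt_one.trans_le hp) hκ hε
  refine ⟨δ, hδ, fun A m hadm u hu hg hv => ?_⟩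
  have hAm := h A m hadm.1 (hadm.norm_m_le hκ)
    (fun J _ => (hadm.2.2.1 J).trans (le_abs_self _)) u
  simp only [Real.norm_of_nonneg (hu _)] at hAm
  exact hAm hg hv
end

section
/- Let (A, m) be an admissible pair with constant κ and let p ≥ 1. For u ∈ ℝ^N with u ≥ 0, the following are equivalent: (a) Σ_{i=1}^N u_i |f_i(u)|^p = 0 and Σ_{i=1}^N |f_i(u)|^p ≠ 0; (b) u = u_I for some nonempty index set I ⊆ {1,…,N}. -/
/-!
The residual `f(u) = m - A u` is the image of `(1, -u)` under the augmented matrix `[m | A]`, so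
both families of determinants control kernels: a vector supported on the columns of a nonsingular
square submatrix and annihilated by the corresponding rows is zero. Principal minors give the
uniqueness of `u_I`. Bordered minors show that no coordinate of `f(u_I)` in `I` vanishes, as
`(1, -u_I)` is not zero; this is how `u_I` with `I` nonempty is told apart from a solution of the
full system. A `u` as in (a) is `u_I` for `I` the support of `f(u)`.
-/

open MeasureTheory Filter

open scoped Matrix

theorem submatrix_mulVec_comp {l k ι κ R : Type*} [Fintype ι] [Fintype κ]
    [NonUnitalNonAssocSemiring R] (B : Matrix l ι R) (r : k → l) {e : κ → ι}
    (he : Function.Injective e) {x : ι → R} (hx : ∀ i ∉ Set.range e, x i = 0) :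
    B.submatrix r e *ᵥ (x ∘ e) = (B *ᵥ x) ∘ r := by
  funext i
  exact Fintype.sum_of_injective e he _ (fun j => B (r i) j * x j)
    (fun j hj => by rw [hx j hj, mul_zero]) fun _ => rfl

theorem eq_zero_of_det_submatrix_ne_zero {l ι κ R : Type*} [Fintype ι] [Fintype κ] [DecidableEq κ]
    [CommRing R] [IsDomain R] {B : Matrix l ι R} {r : κ → l} {e : κ → ι}
    (hdet : (B.submatrix r e).det ≠ 0) (he : Function.Injective e) {x : ι → R}
    (hx : ∀ i ∉ Set.range e, x i = 0) (hB : ∀ k, (B *ᵥ x) (r k) = 0) : x = 0 := by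
  have hker : x ∘ e = 0 := Matrix.eq_zero_of_mulVec_eq_zero hdet <| by
    rw [submatrix_mulVec_comp B r he hx]
    exact funext hB
  funext i
  by_cases hi : i ∈ Set.range e
  · obtain ⟨k, rfl⟩ := hi
    exact congrFun hker k
  · exact hx i hi

/-- The augmented matrix of the system `A u = b`; the column `b` is indexed by `none`. -/
def augmentedMatrix {l ι R : Type*} (A : Matrix l ι R) (b : l → R) : Matrix l (Option ι) R :=
  Matrix.of fun i o => o.elim (b i) (A i)

theorem augmentedMatrix_mulVec_elim {l ι R : Type*} [Fintype ι] [NonAssocRing R]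
    (A : Matrix l ι R) (b : l → R) (u : ι → R) :
    augmentedMatrix A b *ᵥ (fun o => o.elim 1 (-u)) = b - A *ᵥ u := by
  funext i
  simp only [augmentedMatrix, Matrix.mulVec, dotProduct, Fintype.sum_option, Matrix.of_apply,
    Option.elim, mul_one, Pi.neg_apply, mul_neg, Finset.sum_neg_distrib, Pi.sub_apply,
    sub_eq_add_neg]

section Minors

variable {ι R : Type*} [DecidableEq ι] [CommRing R]

/-- The principal minor `Δ_s` of `A`, for an arbitrary index type and coefficient ring. -/
def principalMinor (A : Matrix ι ι R) (s : Finset ι) : R :=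
  (A.submatrix ((↑) : s → ι) (↑)).det

/-- The bordered minor `Δ_{s,j}`, as a minor of the augmented matrix: its rows are those in `s`
together with `j`, its columns are those in `s` together with `b`. -/
def borderedMinor (A : Matrix ι ι R) (b : ι → R) (s : Finset ι) (j : ι) : R :=
  ((augmentedMatrix A b).submatrix (fun o : Option s => o.elim j (↑)) (Option.map (↑))).det

end Minors

/-- The linear system defining `u_I`: the vector `u` vanishes on `I` and satisfies the equations
of `A u = b` outside `I`. -/
structure IsSolutionOff {ι R : Type*} [Fintype ι] [NonUnitalNonAssocRing R] (A : Matrix ι ι R)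
    (b : ι → R) (I : Finset ι) (u : ι → R) : Prop where
  eq_zero : ∀ i ∈ I, u i = 0
  residual_eq_zero : ∀ j ∉ I, (b - A *ᵥ u) j = 0

namespace IsSolutionOff

variable {ι R : Type*} [Fintype ι] [DecidableEq ι] [CommRing R] [IsDomain R]
  {A : Matrix ι ι R} {b u v : ι → R} {I : Finset ι}

theorem unique (hu : IsSolutionOff A b I u) (hv : IsSolutionOff A b I v)
    (hdet : principalMinor A Iᶜ ≠ 0) : u = v := by
  refine sub_eq_zero.mp (eq_zero_of_det_submatrix_ne_zero hdet Subtype.val_injective ?_ ?_)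
  · intro i hi
    have hiI : i ∈ I := by simpa using hi
    rw [Pi.sub_apply, hu.eq_zero i hiI, hv.eq_zero i hiI, sub_zero]
  · rintro ⟨k, hk⟩
    have hkI : k ∉ I := Finset.mem_compl.mp hk
    calc (A *ᵥ (u - v)) k = (b - A *ᵥ v) k - (b - A *ᵥ u) k := by
          simp only [Matrix.mulVec_sub, Pi.sub_apply, sub_sub_sub_cancel_left]
      _ = 0 := by rw [hv.residual_eq_zero k hkI, hu.residual_eq_zero k hkI, sub_zero]

theorem residual_ne_zero (hu : IsSolutionOff A b I u) {j : ι}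
    (hdet : borderedMinor A b Iᶜ j ≠ 0) : (b - A *ᵥ u) j ≠ 0 := by
  intro hj
  have hzero : (fun o : Option ι => o.elim 1 (-u)) = 0 := by
    refine eq_zero_of_det_submatrix_ne_zero hdet
      (Option.map_injective Subtype.val_injective) ?_ ?_
    · rintro (_ | i) hi
      · exact (hi ⟨none, rfl⟩).elim
      · have hiI : i ∈ I := by
          by_contra hiI
          exact hi ⟨some ⟨i, Finset.mem_compl.mpr hiI⟩, rfl⟩
        exact neg_eq_zero.mpr (hu.eq_zero i hiI)
    · rw [augmentedMatrix_mulVec_elim]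
      rintro (_ | ⟨k, hk⟩)
      · exact hj
      · exact hu.residual_eq_zero k (Finset.mem_compl.mp hk)
  exact one_ne_zero (congrFun hzero none)

end IsSolutionOff

theorem complementary_and_residual_ne_zero_iff {ι R : Type*} [Fintype ι] [DecidableEq ι]
    [CommRing R] [IsDomain R] {A : Matrix ι ι R} {b : ι → R}
    (hdet : ∀ I : Finset ι, ∀ j ∈ I, borderedMinor A b Iᶜ j ≠ 0) (u : ι → R) :
    ((∀ i, u i = 0 ∨ (b - A *ᵥ u) i = 0) ∧ ∃ i, (b - A *ᵥ u) i ≠ 0) ↔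
      ∃ I : Finset ι, I.Nonempty ∧ IsSolutionOff A b I u := by
  classical
  constructor
  · rintro ⟨hcompl, i, hi⟩
    refine ⟨({j | (b - A *ᵥ u) j ≠ 0} : Finset ι),
      ⟨i, (Finset.mem_filter_univ i).mpr hi⟩, ?_, ?_⟩
    · exact fun k hk => (hcompl k).resolve_right ((Finset.mem_filter_univ k).mp hk)
    · exact fun k hk => not_not.mp fun hne => hk ((Finset.mem_filter_univ k).mpr hne)
  · rintro ⟨I, ⟨j, hj⟩, hu⟩
    refine ⟨fun i => ?_, j, hu.residual_ne_zero (hdet I j hj)⟩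
    exact (em (i ∈ I)).imp (hu.eq_zero i) (hu.residual_eq_zero i)

theorem sum_mul_abs_rpow_eq_zero_iff {ι : Type*} [Fintype ι] {p : ℝ} (hp : p ≠ 0) {w : ι → ℝ}
    (hw : ∀ i, 0 ≤ w i) (x : ι → ℝ) :
    ∑ i, w i * |x i| ^ p = 0 ↔ ∀ i, w i = 0 ∨ x i = 0 := by
  rw [Fintype.sum_eq_zero_iff_of_nonneg fun i => mul_nonneg (hw i) (by positivity)]
  simp only [funext_iff, Pi.zero_apply, mul_eq_zero, Real.rpow_eq_zero (abs_nonneg _) hp,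
    abs_eq_zero]

theorem sum_abs_rpow_ne_zero_iff {ι : Type*} [Fintype ι] {p : ℝ} (hp : p ≠ 0) (x : ι → ℝ) :
    ∑ i, |x i| ^ p ≠ 0 ↔ ∃ i, x i ≠ 0 := by
  simpa using (sum_mul_abs_rpow_eq_zero_iff hp (fun _ => zero_le_one) x).not

theorem v_eq_zero_iff_eq_uI_general {ι : Type*} [Fintype ι] [DecidableEq ι] {p : ℝ} (hp : 0 < p)
    {A : Matrix ι ι ℝ} {m : ι → ℝ}
    (hprincipal : ∀ I : Finset ι, I.Nonempty → principalMinor A Iᶜ ≠ 0)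
    (hbordered : ∀ I : Finset ι, ∀ j ∈ I, borderedMinor A m Iᶜ j ≠ 0)
    {uI : Finset ι → ι → ℝ} (huI : ∀ I : Finset ι, I.Nonempty → IsSolutionOff A m I (uI I))
    {u : ι → ℝ} (hu : ∀ i, 0 ≤ u i) :
    (∑ i, u i * |(m - A *ᵥ u) i| ^ p = 0 ∧ ∑ i, |(m - A *ᵥ u) i| ^ p ≠ 0) ↔
      ∃ I : Finset ι, I.Nonempty ∧ u = uI I := by
  rw [sum_mul_abs_rpow_eq_zero_iff hp.ne' hu, sum_abs_rpow_ne_zero_iff hp.ne',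
    complementary_and_residual_ne_zero_iff hbordered]
  refine exists_congr fun I => and_congr_right fun hI => ⟨fun h => ?_, fun h => ?_⟩
  · exact h.unique (huI I hI) (hprincipal I hI)
  · exact h ▸ huI I hI

theorem minorM_eq_borderedMinor {N : ℕ} (A : Matrix (Fin N) (Fin N) ℝ) (m : Fin N → ℝ)
    (I : Finset (Fin N)) (j : Fin N) : minorM A m I j = borderedMinor A m I j := by
  unfold minorM borderedMinor
  congr 1
  ext (_ | k) (_ | l) <;> rfl

/-- For an admissible pair `(A, m)`, `p ≥ 1`, and nonnegative `u`, the following are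
equivalent: (a) `Σ_i u_i |f_i(u)|^p = 0` and `Σ_i |f_i(u)|^p ≠ 0`; (b) `u = u_I` for some
nonempty index set `I`. -/
theorem v_eq_zero_iff_eq_uI {N : ℕ} (hN : 0 < N) (p κ : ℝ) (hp : 1 ≤ p) (hκ : 0 < κ)
    (A : Matrix (Fin N) (Fin N) ℝ) (m : Fin N → ℝ) (hAm : IsAdmissible κ A m)
    (uI : Finset (Fin N) → Fin N → ℝ)
    (huI : ∀ I : Finset (Fin N), (∀ i ∈ I, uI I i = 0) ∧ ∀ j ∉ I, fComp A m (uI I) j = 0)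
    (u : Fin N → ℝ) (hu : ∀ i, 0 ≤ u i) :
    ((∑ i, u i * |fComp A m u i| ^ p) = 0 ∧ (∑ i, |fComp A m u i| ^ p) ≠ 0) ↔
      ∃ I : Finset (Fin N), I.Nonempty ∧ u = uI I := by
  obtain ⟨-, -, hP, hM⟩ := hAm
  refine v_eq_zero_iff_eq_uI_general (zero_lt_one.trans_le hp) (fun I _ => ?_) (fun I j hj => ?_)
    (fun I _ => ⟨(huI I).1, (huI I).2⟩) hu
  · exact (hκ.trans_le (hP Iᶜ)).ne'
  · rw [← minorM_eq_borderedMinor]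
    exact (hκ.trans_le (hM Iᶜ j (by simpa using hj))).ne'
end
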